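/- Let A be a central simple algebra over ℝ whose ℝ-dimension is k² for an odd natural number k. Then A is isomorphic as an ℝ-algebra to the matrix algebra Mat_k(ℝ). (This is the paper's claim that the Galois cohomology set H¹(ℝ; PGL_k) is trivial when k is odd.) -/

import Mathlib

/-!
By Wedderburn–Artin, `A ≃ Mat_n(D)` for a finite-dimensional real division algebra `D`, and
`n² · dim D = k²` forces `dim D` to be odd. For `d : D`, the characteristic polynomial of left
multiplication by `d` is then a real polynomial of odd degree, so it has a real root `μ`
(`exists_isRoot_of_odd_natDegree_real`). An eigenvector `v ≠ 0` satisfies `(d - μ) * v = 0`, and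
since `D` has no zero divisors `d = μ`. Hence `D = ℝ` (`algebraMap_bijective_of_odd_finrank`),
and comparing dimensions gives `n = k`.
-/

/-- A central simple algebra over a field `k`: a finite-dimensional associative unital
`k`-algebra that is a simple ring and whose center is exactly `k·1`. -/
structure IsCentralSimple (k : Type*) (A : Type*) [Field k] [Ring A] [Algebra k A] : Prop where
  finiteDimensional : FiniteDimensional k A
  isSimpleRing : IsSimpleRing A
  center_eq_bot : Subalgebra.center k A = ⊥

/-- Splitting off irreducible factors, each of degree one or two, leaves a linear one. -/
theorem exists_isRoot_of_odd_natDegree_real (f : Polynomial ℝ) (hf : Odd f.natDegree) :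
    ∃ x, f.IsRoot x := by
  induction hn : f.natDegree using Nat.strong_induction_on generalizing f with
  | _ n ih =>
    have hpos : 0 < f.natDegree := hf.pos
    have hf0 : f ≠ 0 := by rintro rfl; simp at hpos
    obtain ⟨g, hg, q, rfl⟩ := Polynomial.exists_irreducible_of_natDegree_pos hpos
    have hg2 := hg.natDegree_le_two
    have hg1 := hg.natDegree_pos
    have hdeg := Polynomial.natDegree_mul (left_ne_zero_of_mul hf0) (right_ne_zero_of_mul hf0)
    obtain h1 | h2 : g.natDegree = 1 ∨ g.natDegree = 2 := by omega
    · obtain ⟨x, hx⟩ := Polynomial.exists_root_of_degree_eq_one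
        ((Polynomial.degree_eq_iff_natDegree_eq_of_pos one_pos).2 h1)
      exact ⟨x, Polynomial.root_mul_right_of_isRoot _ hx⟩
    · have hq : Odd q.natDegree := by
        rw [hdeg, h2] at hf
        grind
      obtain ⟨x, hx⟩ := ih q.natDegree (by omega) q hq rfl
      exact ⟨x, Polynomial.root_mul_left_of_isRoot _ hx⟩

theorem algebraMap_bijective_of_odd_finrank (D : Type*) [DivisionRing D] [Algebra ℝ D]
    [Module.Finite ℝ D] (hD : Odd (Module.finrank ℝ D)) :
    Function.Bijective (algebraMap ℝ D) := by
  refine ⟨(algebraMap ℝ D).injective, fun d => ?_⟩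
  obtain ⟨μ, hμ⟩ := exists_isRoot_of_odd_natDegree_real (LinearMap.mulLeft ℝ d).charpoly
    (by rwa [LinearMap.charpoly_natDegree])
  obtain ⟨v, hv⟩ :=
    ((Module.End.hasEigenvalue_iff_isRoot_charpoly _ _).2 hμ).exists_hasEigenvector
  refine ⟨μ, (mul_right_cancel₀ hv.2 ?_).symm⟩
  simpa [Algebra.smul_def] using hv.apply_eq_smul

/-- A central simple algebra over `ℝ` of dimension `k²` with `k` odd is isomorphic, as an
`ℝ`-algebra, to the matrix algebra `Mat_k(ℝ)`.  (The Galois cohomology set `H¹(ℝ; PGL_k)` is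
trivial for odd `k`.) -/
theorem central_simple_over_R_odd_dim_is_matrix_algebra
    (A : Type*) [Ring A] [Algebra ℝ A] (h : IsCentralSimple ℝ A)
    (k : ℕ) (hk : Odd k) (hdim : Module.finrank ℝ A = k ^ 2) :
    Nonempty (A ≃ₐ[ℝ] Matrix (Fin k) (Fin k) ℝ) := by
  have := h.finiteDimensional
  have := h.isSimpleRing
  have : IsArtinianRing A := IsArtinianRing.of_finite ℝ A
  obtain ⟨n, _, D, _, _, _, ⟨e⟩⟩ :=
    IsSimpleRing.exists_algEquiv_matrix_divisionRing_finite ℝ A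
  have hfin : k ^ 2 = n * n * Module.finrank ℝ D := by
    rw [← hdim, e.toLinearEquiv.finrank_eq, Module.finrank_matrix]
    simp
  have hD : Odd (Module.finrank ℝ D) :=
    (Nat.odd_mul.1 (hfin ▸ hk.pow : Odd (n * n * Module.finrank ℝ D))).2
  let eD : ℝ ≃ₐ[ℝ] D :=
    AlgEquiv.ofBijective (Algebra.ofId ℝ D) (algebraMap_bijective_of_odd_finrank D hD)
  have hkn : k = n := by
    rw [← eD.toLinearEquiv.finrank_eq, Module.finrank_self, mul_one, ← sq] at hfin
    exact Nat.pow_left_injective two_ne_zero hfin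
  subst hkn
  exact ⟨e.trans eD.symm.mapMatrix⟩
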